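/- arXiv:2601.13818 — 3 statements merged into one kernel-verified Lean document; each statement's English description precedes it below -/
import Mathlib

section
/- (Stationary solution of the FrBD_{n+1}-GM model, Eqs. (18)–(19).) Consider the lumped FrBD_{n+1}-GM model with constant input v_r ∈ ℝ² and regularisation parameter ε > 0, and set g := M(v_r)² v_r / ‖M(v_r) v_r‖_{2,ε}. Then the point z* = −K₀⁻¹ g, f_i* = 0 (i = 1,…,n) is an equilibrium of the ODE system, i.e. the right-hand sides of all its equations vanish at (z*, f_1*, …, f_n*), and the corresponding stationary total bristle force equals f = K₀ z* + Σ_{i=1}^n f_i* = −M(v_r)² v_r / ‖M(v_r) v_r‖_{2,ε}. -/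
open Matrix

/-- The regularised Euclidean norm `‖y‖_{2,ε} = √(‖y‖₂² + ε)` on `ℝ²`. -/
noncomputable def regNorm (ε : ℝ) (y : Fin 2 → ℝ) : ℝ := Real.sqrt (y ⬝ᵥ y + ε)

/-!
With a constant input the friction matrix and the regularised norm are constant, so the system is
affine in the state. Relaxed branches (`f i = 0`) stay relaxed once the bristle is at rest, and then
`K₀ z` carries the whole force. The bristle is at rest when this force is `-g`, because the factor
`‖M(v) v‖_{2,ε} M(v)⁻²` maps `g` back to the input `v`.
-/

theorem regNorm_pos {ε : ℝ} (hε : 0 < ε) (y : Fin 2 → ℝ) : 0 < regNorm ε y :=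
  Real.sqrt_pos.mpr (add_pos_of_nonneg_of_pos (dotProduct_self_star_nonneg y) hε)

section BristleModel

variable {α 𝕜 ι κ : Type*} [CommRing α] [Field 𝕜] [Fintype ι] [Fintype κ]

/-- The total bristle force `K₀ z + ∑ i, f i` of a generalised Maxwell element with micro-stiffness
`K₀` and branch forces `f i`, at the bristle deflection `z`. -/
def bristleForce (K₀ : Matrix ι ι α) (z : ι → α) (f : κ → ι → α) : ι → α :=
  K₀ *ᵥ z + ∑ i, f i

/-- The right-hand side `-T f + K ż` of the evolution equation of a branch force `f`, as a function
of the bristle velocity `ż`. The relaxation rate `T` stands for `τ⁻¹`. -/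
def branchForceRate (T K : Matrix ι ι α) (f zdot : ι → α) : ι → α :=
  -(T *ᵥ f) + K *ᵥ zdot

/-- The right-hand side `-s A⁻¹ F - v` of the bristle equation at total bristle force `F` and input
`v`. Here `A` stands for the squared friction matrix `M(v)²` and `s` for the regularised norm
`‖M(v) v‖_{2,ε}`. -/
noncomputable def bristleRate [DecidableEq ι] (A : Matrix ι ι α) (s : α) (v F : ι → α) : ι → α :=
  -(s • A⁻¹ *ᵥ F) - v

theorem branchForceRate_zero_zero (T K : Matrix ι ι α) : branchForceRate T K 0 0 = 0 := by
  simp [branchForceRate]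

theorem bristleForce_neg_inv_mulVec_zero [DecidableEq ι] {K₀ : Matrix ι ι α} (hK₀ : IsUnit K₀)
    (g : ι → α) : bristleForce K₀ (-(K₀⁻¹ *ᵥ g)) (0 : κ → ι → α) = -g := by
  have hdet : IsUnit K₀.det := (isUnit_iff_isUnit_det K₀).mp hK₀
  simp [bristleForce, mulVec_neg, mul_nonsing_inv K₀ hdet]

theorem bristleRate_neg_inv_smul_mulVec [DecidableEq ι] {A : Matrix ι ι 𝕜} (hA : IsUnit A) {s : 𝕜}
    (hs : s ≠ 0) (v : ι → 𝕜) : bristleRate A s v (-(s⁻¹ • A *ᵥ v)) = 0 := by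
  have hdet : IsUnit A.det := (isUnit_iff_isUnit_det A).mp hA
  have hinv : A⁻¹ *ᵥ (s⁻¹ • A *ᵥ v) = s⁻¹ • v := by
    rw [mulVec_smul, mulVec_mulVec, nonsing_inv_mul A hdet, one_mulVec]
  rw [bristleRate, mulVec_neg, hinv, smul_neg, neg_neg, smul_inv_smul₀ hs, sub_self]

theorem frbd_gm_stationary_solution_general [DecidableEq ι] {K₀ A : Matrix ι ι 𝕜}
    (hK₀ : IsUnit K₀) (hA : IsUnit A) (K T : κ → Matrix ι ι 𝕜) {s : 𝕜} (hs : s ≠ 0) (v : ι → 𝕜) :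
    let g : ι → 𝕜 := s⁻¹ • A *ᵥ v
    let zstar : ι → 𝕜 := -(K₀⁻¹ *ᵥ g)
    let fstar : κ → ι → 𝕜 := 0
    let zdot : ι → 𝕜 := bristleRate A s v (bristleForce K₀ zstar fstar)
    zdot = 0 ∧ (∀ i, branchForceRate (T i) (K i) (fstar i) zdot = 0) ∧
      bristleForce K₀ zstar fstar = -g := by
  intro g zstar fstar zdot
  have hforce : bristleForce K₀ zstar fstar = -g := bristleForce_neg_inv_mulVec_zero hK₀ g
  have hrest : zdot = 0 :=
    (congrArg (bristleRate A s v) hforce).trans (bristleRate_neg_inv_smul_mulVec hA hs v)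
  have hbranch (i : κ) : branchForceRate (T i) (K i) (fstar i) zdot = 0 := by
    rw [hrest]
    exact branchForceRate_zero_zero (T i) (K i)
  exact ⟨hrest, hbranch, hforce⟩

end BristleModel

/-- Stationary solution of the lumped FrBD_{n+1}-GM model (Eqs. (18)–(19)). -/
theorem frbd_gm_stationary_solution (n : ℕ)
    (K₀ : Matrix (Fin 2) (Fin 2) ℝ) (K C : Fin n → Matrix (Fin 2) (Fin 2) ℝ)
    (hK₀ : K₀.PosDef) (hK : ∀ i, (K i).PosDef) (hC : ∀ i, (C i).PosDef)
    (M : (Fin 2 → ℝ) → Matrix (Fin 2) (Fin 2) ℝ) (hM : ∀ y, (M y).PosDef)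
    (ε : ℝ) (hε : 0 < ε) (vr : Fin 2 → ℝ) :
    let g : Fin 2 → ℝ :=
      (regNorm ε ((M vr).mulVec vr))⁻¹ • ((M vr * M vr).mulVec vr)
    let zstar : Fin 2 → ℝ := -(K₀⁻¹.mulVec g)
    let fstar : Fin n → (Fin 2 → ℝ) := fun _ => 0
    let rhsz : Fin 2 → ℝ :=
      -(regNorm ε ((M vr).mulVec vr) •
        ((M vr * M vr)⁻¹.mulVec (K₀.mulVec zstar + ∑ i, fstar i))) - vr
    -- the right-hand side of the bristle equation vanishes
    rhsz = 0 ∧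
    -- the right-hand sides of the branch-force equations vanish
    (∀ i, -((C i * (K i)⁻¹)⁻¹.mulVec (fstar i)) + (K i).mulVec rhsz = 0) ∧
    -- the stationary total bristle force
    K₀.mulVec zstar + ∑ i, fstar i =
      -((regNorm ε ((M vr).mulVec vr))⁻¹ • ((M vr * M vr).mulVec vr)) :=
  frbd_gm_stationary_solution_general hK₀.isUnit ((hM vr).isUnit.mul (hM vr).isUnit) K
    (fun i => (C i * (K i)⁻¹)⁻¹) (regNorm_pos hε _).ne' vr
end

section
/- (Passivity of the lumped FrBD_{n+1}-GKV model.) Let ε ≥ 0, let v_r : [0,T] → ℝ² be continuous, and let z, z_1, …, z_n : [0,T] → ℝ² be differentiable functions satisfying the lumped FrBD_{n+1}-GKV ODE system on (0,T). Define z₀ := z − Σ_{i=1}^n z_i, the storage function W(t) := ½ z₀(t)ᵀ K₀ z₀(t) + ½ Σ_{i=1}^n z_i(t)ᵀ K_i z_i(t), and the total force f := K₀ z₀. Then W is differentiable on (0,T) with W′(t) ≤ −f(t)ᵀ v_r(t) for every t ∈ (0,T); consequently W(t) − W(0) ≤ ∫₀ᵗ (−f(t′)ᵀ v_r(t′)) dt′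 for all t ∈ [0,T]. -/
open Matrix MeasureTheory

/-- The right-hand side of the bristle equation of the lumped FrBD models:
`ż = −M(v_r)⁻² ‖M(v_r) v_r‖_{2,ε} F − v_r`, where `F` is the total bristle force. -/
noncomputable def zRhs (M : (Fin 2 → ℝ) → Matrix (Fin 2) (Fin 2) ℝ) (ε : ℝ)
    (vr F : Fin 2 → ℝ) : Fin 2 → ℝ :=
  -(regNorm ε ((M vr).mulVec vr) • ((M vr * M vr)⁻¹.mulVec F)) - vr

/-! The springs store the energy `W`, so `W'` is the total force `f = K₀ z₀` times `ż₀` plus the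
spring forces `K i zᵢ` times `żᵢ`. With `G i = (C i)⁻¹`, the damper equations read
`żᵢ = G i (f - K i zᵢ)`. Substituting them and `ż₀ = ż - ∑ żᵢ` gives the power balance
`W' = -f ⬝ v - f ⬝ R f - ∑ (f - K i zᵢ) ⬝ G i (f - K i zᵢ)`, where `R = ‖M v‖_{2,ε} (M²)⁻¹` is the
friction mobility. The last two terms are the power dissipated by friction and by the dampers.
-/

section Calculus

open Set

variable {m : Type*} [Fintype m]

theorem hasDerivAt_dotProduct {u v : ℝ → m → ℝ} {u' v' : m → ℝ} {t : ℝ}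
    (hu : HasDerivAt u u' t) (hv : HasDerivAt v v' t) :
    HasDerivAt (fun s => u s ⬝ᵥ v s) (u' ⬝ᵥ v t + u t ⬝ᵥ v') t := by
  simp only [dotProduct, ← Finset.sum_add_distrib]
  exact HasDerivAt.fun_sum fun i _ => (hasDerivAt_pi.1 hu i).mul (hasDerivAt_pi.1 hv i)

theorem hasDerivAt_mulVec {l : Type*} [Finite l] (A : Matrix l m ℝ) {u : ℝ → m → ℝ} {u' : m → ℝ}
    {t : ℝ} (hu : HasDerivAt u u' t) : HasDerivAt (fun s => A *ᵥ u s) (A *ᵥ u') t :=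
  hasDerivAt_pi.2 fun i => by
    simpa only [mulVec, zero_dotProduct, zero_add] using
      hasDerivAt_dotProduct (hasDerivAt_const t (A i)) hu

theorem hasDerivAt_dotProduct_mulVec_self {A : Matrix m m ℝ} (hA : A.IsHermitian)
    {u : ℝ → m → ℝ} {u' : m → ℝ} {t : ℝ} (hu : HasDerivAt u u' t) :
    HasDerivAt (fun s => u s ⬝ᵥ A *ᵥ u s) (2 * (A *ᵥ u t ⬝ᵥ u')) t := by
  have hA_transpose : Aᵀ = A := by rw [← conjTranspose_eq_transpose_of_trivial, hA.eq]
  have hself_adjoint : u t ⬝ᵥ A *ᵥ u' = A *ᵥ u t ⬝ᵥ u' := by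
    rw [dotProduct_mulVec, ← mulVec_transpose, hA_transpose]
  refine (hasDerivAt_dotProduct hu (hasDerivAt_mulVec A hu)).congr_deriv ?_
  rw [hself_adjoint, dotProduct_comm u', two_mul]

theorem integrableOn_dotProduct_of_continuousOn {X : Type*} [TopologicalSpace X] [T2Space X]
    [MeasurableSpace X] [OpensMeasurableSpace X] {μ : Measure X} {s : Set X} (hs : IsCompact s)
    {u v : X → m → ℝ} (hu : ContinuousOn u s) (hv : IntegrableOn v s μ) :
    IntegrableOn (fun x => u x ⬝ᵥ v x) s μ :=
  integrable_finsetSum _ fun i _ =>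
    IntegrableOn.continuousOn_mul (continuousOn_pi.1 hu i) (Integrable.eval hv i) hs

theorem sub_le_integral_of_exists_hasDerivAt_le {W p : ℝ → ℝ} {a b : ℝ}
    (hW : ContinuousOn W (Icc a b)) (hp : IntegrableOn p (Icc a b))
    (hderiv : ∀ t ∈ Ioo a b, ∃ w, HasDerivAt W w t ∧ w ≤ p t) {t : ℝ} (ht : t ∈ Icc a b) :
    W t - W a ≤ ∫ s in a..t, p s := by
  choose! w hw hwp using hderiv
  have hIcc : Icc a t ⊆ Icc a b := Icc_subset_Icc_right ht.2
  have hIoo : Ioo a t ⊆ Ioo a b := Ioo_subset_Ioo_right ht.2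
  exact intervalIntegral.sub_le_integral_of_hasDeriv_right_of_le ht.1 (hW.mono hIcc)
    (fun s hs => (hw s (hIoo hs)).hasDerivWithinAt) (hp.mono_set hIcc)
    (fun s hs => hwp s (hIoo hs))

end Calculus

section PowerBalance

variable {m ι : Type*} [Fintype m] [Fintype ι]

theorem gkv_power_balance {S : Type*} [CommRing S] (R : Matrix m m S) (G : ι → Matrix m m S)
    (f v : m → S) (σ : ι → m → S) :
    f ⬝ᵥ (-(R *ᵥ f) - v - ∑ i, G i *ᵥ (f - σ i)) + ∑ i, σ i ⬝ᵥ G i *ᵥ (f - σ i) =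
      -(f ⬝ᵥ v) - f ⬝ᵥ R *ᵥ f - ∑ i, (f - σ i) ⬝ᵥ G i *ᵥ (f - σ i) := by
  simp only [dotProduct_sub f, dotProduct_neg, dotProduct_sum,
    sub_dotProduct f (σ _) (G _ *ᵥ _), Finset.sum_sub_distrib]
  ring

theorem gkv_power_le {R : Matrix m m ℝ} {G : ι → Matrix m m ℝ} (hR : R.PosSemidef)
    (hG : ∀ i, (G i).PosSemidef) (f v : m → ℝ) (σ : ι → m → ℝ) :
    f ⬝ᵥ (-(R *ᵥ f) - v - ∑ i, G i *ᵥ (f - σ i)) + ∑ i, σ i ⬝ᵥ G i *ᵥ (f - σ i) ≤ -(f ⬝ᵥ v) := by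
  have hfriction : 0 ≤ f ⬝ᵥ R *ᵥ f := hR.dotProduct_mulVec_nonneg f
  have hdampers : 0 ≤ ∑ i, (f - σ i) ⬝ᵥ G i *ᵥ (f - σ i) :=
    Finset.sum_nonneg fun i _ => (hG i).dotProduct_mulVec_nonneg (f - σ i)
  rw [gkv_power_balance]
  linarith

end PowerBalance

section Storage

variable {m ι : Type*} [Fintype m] [Fintype ι]

/-- The elastic energy stored in the springs `K₀` and `K i` of a generalised Kelvin–Voigt element,
as a function of their elongations `x₀` and `x i`; this is the storage function of the model. -/
noncomputable def gkvStorage (K₀ : Matrix m m ℝ) (K : ι → Matrix m m ℝ) (x₀ : m → ℝ)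
    (x : ι → m → ℝ) : ℝ :=
  (1/2) * (x₀ ⬝ᵥ K₀ *ᵥ x₀) + (1/2) * ∑ i, x i ⬝ᵥ K i *ᵥ x i

theorem continuousOn_gkvStorage (K₀ : Matrix m m ℝ) (K : ι → Matrix m m ℝ) {X : Type*}
    [TopologicalSpace X] {x₀ : X → m → ℝ} {x : ι → X → m → ℝ} {s : Set X}
    (hx₀ : ContinuousOn x₀ s) (hx : ∀ i, ContinuousOn (x i) s) :
    ContinuousOn (fun p => gkvStorage K₀ K (x₀ p) fun i => x i p) s := by
  have hstorage : Continuous fun y : (m → ℝ) × (ι → m → ℝ) => gkvStorage K₀ K y.1 y.2 := by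
    unfold gkvStorage
    fun_prop
  exact hstorage.comp_continuousOn (hx₀.prodMk (continuousOn_pi.2 hx))

variable {K₀ : Matrix m m ℝ} {K : ι → Matrix m m ℝ}

theorem hasDerivAt_gkvStorage (hK₀ : K₀.IsHermitian) (hK : ∀ i, (K i).IsHermitian)
    {x₀ : ℝ → m → ℝ} {x : ι → ℝ → m → ℝ} {x₀' : m → ℝ} {x' : ι → m → ℝ} {t : ℝ}
    (hx₀ : HasDerivAt x₀ x₀' t) (hx : ∀ i, HasDerivAt (x i) (x' i) t) :
    HasDerivAt (fun s => gkvStorage K₀ K (x₀ s) fun i => x i s)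
      (K₀ *ᵥ x₀ t ⬝ᵥ x₀' + ∑ i, K i *ᵥ x i t ⬝ᵥ x' i) t := by
  have hsprings := HasDerivAt.fun_sum (u := Finset.univ)
    fun i _ => hasDerivAt_dotProduct_mulVec_self (hK i) (hx i)
  refine (((hasDerivAt_dotProduct_mulVec_self hK₀ hx₀).const_mul (1/2)).fun_add
    (hsprings.const_mul (1/2))).congr_deriv ?_
  rw [← Finset.mul_sum]
  ring

theorem exists_hasDerivAt_gkvStorage_le (hK₀ : K₀.IsHermitian) (hK : ∀ i, (K i).IsHermitian)
    {R : Matrix m m ℝ} {G : ι → Matrix m m ℝ} (hR : R.PosSemidef) (hG : ∀ i, (G i).PosSemidef)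
    {z : ℝ → m → ℝ} {zi : ι → ℝ → m → ℝ} {v : m → ℝ} {t : ℝ}
    (hz : HasDerivAt z (-(R *ᵥ K₀ *ᵥ (z t - ∑ i, zi i t)) - v) t)
    (hzi : ∀ i, HasDerivAt (zi i)
      (-((G i * K i) *ᵥ zi i t) + (G i * K₀) *ᵥ (z t - ∑ j, zi j t)) t) :
    ∃ w, HasDerivAt (fun s => gkvStorage K₀ K (z s - ∑ i, zi i s) fun i => zi i s) w t ∧
      w ≤ -(K₀ *ᵥ (z t - ∑ i, zi i t) ⬝ᵥ v) := by
  set f := K₀ *ᵥ (z t - ∑ i, zi i t) with hf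
  have hdamper : ∀ i, HasDerivAt (zi i) (G i *ᵥ (f - K i *ᵥ zi i t)) t := fun i =>
    (hzi i).congr_deriv (by simp only [hf, mulVec_sub (G i), mulVec_mulVec, neg_add_eq_sub])
  have hz₀ := hz.fun_sub (HasDerivAt.fun_sum (u := Finset.univ) fun i _ => hdamper i)
  exact ⟨_, hasDerivAt_gkvStorage hK₀ hK hz₀ hdamper,
    gkv_power_le hR hG f v fun i => K i *ᵥ zi i t⟩

end Storage

/-- The friction mobility of the FrBD bristle model at relative velocity `v`: the matrix `R` with
which the bristle equation `zRhs` reads `ż = -R F - v`. -/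
noncomputable def frictionMobility (M : (Fin 2 → ℝ) → Matrix (Fin 2) (Fin 2) ℝ) (ε : ℝ)
    (v : Fin 2 → ℝ) : Matrix (Fin 2) (Fin 2) ℝ :=
  regNorm ε (M v *ᵥ v) • (M v * M v)⁻¹

theorem zRhs_eq_frictionMobility (M : (Fin 2 → ℝ) → Matrix (Fin 2) (Fin 2) ℝ) (ε : ℝ)
    (v F : Fin 2 → ℝ) : zRhs M ε v F = -(frictionMobility M ε v *ᵥ F) - v := by
  rw [zRhs, frictionMobility, smul_mulVec]

theorem posSemidef_frictionMobility {M : (Fin 2 → ℝ) → Matrix (Fin 2) (Fin 2) ℝ} {v : Fin 2 → ℝ}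
    (hM : (M v).IsHermitian) (ε : ℝ) : (frictionMobility M ε v).PosSemidef := by
  have hsq : (M v * M v).PosSemidef := by
    simpa only [hM.eq] using posSemidef_conjTranspose_mul_self (M v)
  exact hsq.inv.smul (Real.sqrt_nonneg _)

open Set in
theorem frbd_gkv_lumped_passivity_general {m ι : Type*} [Fintype m] [Fintype ι]
    {K₀ : Matrix m m ℝ} {K : ι → Matrix m m ℝ}
    (hK₀ : K₀.IsHermitian) (hK : ∀ i, (K i).IsHermitian) {a b : ℝ}
    {R : ℝ → Matrix m m ℝ} (hR : ∀ t ∈ Ioo a b, (R t).PosSemidef)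
    {G : ι → ℝ → Matrix m m ℝ} (hG : ∀ i, ∀ t ∈ Ioo a b, (G i t).PosSemidef)
    {vr z : ℝ → m → ℝ} {zi : ι → ℝ → m → ℝ} (hvr : IntegrableOn vr (Icc a b))
    (hzcont : ContinuousOn z (Icc a b)) (hzicont : ∀ i, ContinuousOn (zi i) (Icc a b))
    (hz : ∀ t ∈ Ioo a b, HasDerivAt z (-(R t *ᵥ K₀ *ᵥ (z t - ∑ i, zi i t)) - vr t) t)
    (hzi : ∀ i, ∀ t ∈ Ioo a b, HasDerivAt (zi i)
      (-((G i t * K i) *ᵥ zi i t) + (G i t * K₀) *ᵥ (z t - ∑ j, zi j t)) t) :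
    let z₀ : ℝ → m → ℝ := fun t => z t - ∑ i, zi i t
    let W : ℝ → ℝ := fun t => gkvStorage K₀ K (z₀ t) fun i => zi i t
    (∀ t ∈ Ioo a b, ∃ w, HasDerivAt W w t ∧ w ≤ -(K₀ *ᵥ z₀ t ⬝ᵥ vr t)) ∧
    (∀ t ∈ Icc a b, W t - W a ≤ ∫ s in a..t, -(K₀ *ᵥ z₀ s ⬝ᵥ vr s)) := by
  intro z₀ W
  have hderiv : ∀ t ∈ Ioo a b, ∃ w, HasDerivAt W w t ∧ w ≤ -(K₀ *ᵥ z₀ t ⬝ᵥ vr t) := fun t ht =>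
    exists_hasDerivAt_gkvStorage_le hK₀ hK (hR t ht) (hG · t ht) (hz t ht) (hzi · t ht)
  have hz₀ : ContinuousOn z₀ (Icc a b) :=
    hzcont.sub (continuousOn_finsetSum _ fun i _ => hzicont i)
  have hW : ContinuousOn W (Icc a b) :=
    continuousOn_gkvStorage K₀ K hz₀ hzicont
  have hforce : ContinuousOn (fun t => K₀ *ᵥ z₀ t) (Icc a b) :=
    (continuous_const.matrix_mulVec continuous_id).comp_continuousOn hz₀
  have hpower : IntegrableOn (fun t => -(K₀ *ᵥ z₀ t ⬝ᵥ vr t)) (Icc a b) :=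
    (integrableOn_dotProduct_of_continuousOn isCompact_Icc hforce hvr).neg
  exact ⟨hderiv, fun _ => sub_le_integral_of_exists_hasDerivAt_le hW hpower hderiv⟩

/-- Passivity of the lumped FrBD_{n+1}-GKV model. -/
theorem frbd_gkv_lumped_passivity (n : ℕ)
    (K₀ : Matrix (Fin 2) (Fin 2) ℝ) (K C : Fin n → Matrix (Fin 2) (Fin 2) ℝ)
    (hK₀ : K₀.PosDef) (hK : ∀ i, (K i).PosDef) (hC : ∀ i, (C i).PosDef)
    (M : (Fin 2 → ℝ) → Matrix (Fin 2) (Fin 2) ℝ) (hM : ∀ y, (M y).PosDef)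
    (ε : ℝ) (hε : 0 ≤ ε) (T : ℝ) (hT : 0 < T)
    (vr : ℝ → (Fin 2 → ℝ)) (hvr : ContinuousOn vr (Set.Icc 0 T))
    (z : ℝ → (Fin 2 → ℝ)) (zi : Fin n → ℝ → (Fin 2 → ℝ))
    (hzdiff : DifferentiableOn ℝ z (Set.Icc 0 T))
    (hzidiff : ∀ i, DifferentiableOn ℝ (zi i) (Set.Icc 0 T))
    (hz : ∀ t ∈ Set.Ioo 0 T,
      HasDerivAt z (zRhs M ε (vr t) (K₀.mulVec (z t - ∑ i, zi i t))) t)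
    (hzi : ∀ i, ∀ t ∈ Set.Ioo 0 T,
      HasDerivAt (zi i)
        (-(((C i)⁻¹ * K i).mulVec (zi i t)) +
          ((C i)⁻¹ * K₀).mulVec (z t - ∑ j, zi j t)) t) :
    let z₀ : ℝ → (Fin 2 → ℝ) := fun t => z t - ∑ i, zi i t
    let W : ℝ → ℝ := fun t =>
      (1/2) * (z₀ t ⬝ᵥ K₀.mulVec (z₀ t)) +
      (1/2) * ∑ i, zi i t ⬝ᵥ (K i).mulVec (zi i t)
    (∀ t ∈ Set.Ioo 0 T, ∃ w : ℝ, HasDerivAt W w t ∧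
        w ≤ -(K₀.mulVec (z₀ t) ⬝ᵥ vr t)) ∧
    (∀ t ∈ Set.Icc 0 T,
      W t - W 0 ≤ ∫ t' in (0:ℝ)..t, -(K₀.mulVec (z₀ t') ⬝ᵥ vr t')) :=
  frbd_gkv_lumped_passivity_general hK₀.isHermitian (fun i => (hK i).isHermitian)
    (fun t _ => posSemidef_frictionMobility (hM (vr t)).isHermitian ε)
    (fun i _ _ => (hC i).inv.posSemidef) hvr.integrableOn_Icc hzdiff.continuousOn
    (fun i => (hzidiff i).continuousOn)
    (fun t ht => zRhs_eq_frictionMobility M ε _ _ ▸ hz t ht) hzi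
end

section
/- (Lemma 5.1: passivity of the standard linear FrBD_{n+1}-GM model on a rectangular contact area.) Let a, b, S > 0 and let 𝒞 = [−a, a] × [−b, b]. Let p : ℝ² → ℝ be continuously differentiable with p ≥ 0 and ∂p/∂x ≥ 0 on 𝒞 (so that ∇·(p V̄) ≤ 0 for the transport field V̄ = (−1, 0), condition (56)). Let ε ≥ 0, let v̄ : 𝒞 × [0, S] → ℝ² be continuous, V_r : [0, S] → ℝ continuous with V_r(s) ≥ V_min for some V_min > 0, and let M be continuous with symmetric positive definite values. Suppose z, f_1, …, f_n : 𝒞 × [0, S] → ℝ² are continuously differentiable, satisfy the standard linear FrBD_{n+1}-GM equations at every interior point, and satisfy the leading-edge boundary condition z(a, y, s) = 0 and f_i(a, y, s) = 0 for all y ∈ [−b, b], s ∈ [0, S], i = 1,…,n. Define the storage function W(s) := ½ ∬_𝒞 p(x, y) ( z(x,y,s)ᵀ K₀ z(x,y,s) + Σ_{i=1}^n f_i(x,y,s)ᵀ K_i⁻¹ f_i(x,y,s) ) dx dy and the total force f := K₀ z + Σ_{i=1}^n f_i. Then for every s ∈ [0, S], W(s) − W(0) ≤ ∫₀ˢ (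 −∬_𝒞 p(x, y) f(x,y,s′)ᵀ v̄(x,y,s′) dx dy ) ds′. -/
open Matrix MeasureTheory

/-!
Along the transport direction `(-1, 1)` in the `(x, t)`-plane, the weighted storage density
`p · H(w)` grows at rate `p · dH(w)(D w) - ∂ₓp · H(w)`, which is at most `p` times the supply rate
because `∂ₓp ≥ 0` and `H ≥ 0`. Integrating with the divergence theorem leaves two boundary terms:
the one at the leading edge vanishes and the one at the trailing edge is an outflow of storage.

For the bristle equations, `dH(w)(D w) = (total force) · D z - ∑ᵢ fᵢ · Kᵢ⁻¹ τᵢ⁻¹ fᵢ / V_r`, and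
inserting `D z = Ψ · (total force) - v̄` leaves the supply rate `-(total force) · v̄` minus
nonnegative dissipation.
-/

open Set

section Transport

lemma integral_prod_mono_of_ae_slice {α β : Type*} [MeasurableSpace α] [MeasurableSpace β]
    {μ : Measure α} {ν : Measure β} [SFinite μ] [SFinite ν] {φ ψ : α × β → ℝ}
    (hφ : Integrable φ (μ.prod ν)) (hψ : Integrable ψ (μ.prod ν))
    (hle : ∀ᵐ y ∂ν, ∫ x, φ (x, y) ∂μ ≤ ∫ x, ψ (x, y) ∂μ) :
    ∫ q, φ q ∂μ.prod ν ≤ ∫ q, ψ q ∂μ.prod ν := by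
  rw [integral_prod_symm φ hφ, integral_prod_symm ψ hψ]
  exact integral_mono_ae hφ.integral_prod_right hψ.integral_prod_right hle

variable {x₀ x₁ y₀ y₁ t₀ t₁ : ℝ}

lemma continuousOn_fderivWithin_rectangle {G : ℝ × ℝ → ℝ} (hx : x₀ < x₁) (ht : t₀ < t₁)
    (hG : ContDiffOn ℝ 1 G (Icc x₀ x₁ ×ˢ Icc t₀ t₁)) :
    ContinuousOn (fderivWithin ℝ G (Icc x₀ x₁ ×ˢ Icc t₀ t₁)) (Icc x₀ x₁ ×ˢ Icc t₀ t₁) :=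
  hG.continuousOn_fderivWithin ((uniqueDiffOn_Icc hx).prod (uniqueDiffOn_Icc ht)) le_rfl

lemma setIntegral_fderivWithin_transport {G : ℝ × ℝ → ℝ} (hx : x₀ < x₁) (ht : t₀ < t₁)
    (hG : ContDiffOn ℝ 1 G (Icc x₀ x₁ ×ˢ Icc t₀ t₁)) :
    ∫ q in Icc x₀ x₁ ×ˢ Icc t₀ t₁, fderivWithin ℝ G (Icc x₀ x₁ ×ˢ Icc t₀ t₁) q (-1, 1) =
      (∫ x in Icc x₀ x₁, G (x, t₁)) - (∫ x in Icc x₀ x₁, G (x, t₀)) -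
        (∫ t in Icc t₀ t₁, G (x₁, t)) + ∫ t in Icc t₀ t₁, G (x₀, t) := by
  set R := Icc x₀ x₁ ×ˢ Icc t₀ t₁
  have hR_Icc : R = Icc (x₀, t₀) (x₁, t₁) := Icc_prod_Icc ..
  have hderiv : ∀ q ∈ Ioo x₀ x₁ ×ˢ Ioo t₀ t₁, HasFDerivAt G (fderivWithin ℝ G R q) q := fun q hq ↦
    have hRq : R ∈ nhds q := prod_mem_nhds (Icc_mem_nhds hq.1.1 hq.1.2) (Icc_mem_nhds hq.2.1 hq.2.2)
    (hG.differentiableOn one_ne_zero q (mem_of_mem_nhds hRq)).hasFDerivWithinAt.hasFDerivAt hRq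
  have hsplit (L : ℝ × ℝ →L[ℝ] ℝ) : L (-1, 1) = (-L) (1, 0) + L (0, 1) := by
    rw [_root_.neg_apply, ← map_neg, ← map_add]
    simp
  have hG_int : IntegrableOn (fun q ↦ (-fderivWithin ℝ G R q) (1, 0) + fderivWithin ℝ G R q (0, 1))
      R := by
    simp only [← hsplit]
    exact ((continuousOn_fderivWithin_rectangle hx ht hG).clm_apply
      continuousOn_const).integrableOn_compact (isCompact_Icc.prod isCompact_Icc)
  have hdiv := integral_divergence_prod_Icc_of_hasFDerivAt_of_le
    (fun q ↦ -G q) G (fun q ↦ -fderivWithin ℝ G R q) (fderivWithin ℝ G R) (x₀, t₀) (x₁, t₁)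
    ⟨hx.le, ht.le⟩ (hR_Icc ▸ hG.continuousOn.neg) (hR_Icc ▸ hG.continuousOn)
    (fun q hq ↦ (hderiv q hq).neg) hderiv (hR_Icc ▸ hG_int)
  simp only [← hR_Icc, ← hsplit,
    intervalIntegral.integral_of_le hx.le, intervalIntegral.integral_of_le ht.le,
    ← integral_Icc_eq_integral_Ioc, integral_neg] at hdiv
  linarith

lemma fderivWithin_transport_eq {G : ℝ × ℝ → ℝ} {x t gx gt : ℝ}
    (hG : ContDiffOn ℝ 1 G (Icc x₀ x₁ ×ˢ Icc t₀ t₁)) (hx : x ∈ Ioo x₀ x₁) (ht : t ∈ Ioo t₀ t₁)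
    (hgx : HasDerivAt (fun x' ↦ G (x', t)) gx x) (hgt : HasDerivAt (fun t' ↦ G (x, t')) gt t) :
    fderivWithin ℝ G (Icc x₀ x₁ ×ˢ Icc t₀ t₁) (x, t) (-1, 1) = gt - gx := by
  have hR : Icc x₀ x₁ ×ˢ Icc t₀ t₁ ∈ nhds (x, t) :=
    prod_mem_nhds (Icc_mem_nhds hx.1 hx.2) (Icc_mem_nhds ht.1 ht.2)
  have hderiv : HasFDerivAt G (fderiv ℝ G (x, t)) (x, t) :=
    ((hG.differentiableOn one_ne_zero).differentiableAt hR).hasFDerivAt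
  have hgx_eq : gx = fderiv ℝ G (x, t) (1, 0) :=
    hgx.unique (hderiv.comp_hasDerivAt x ((hasDerivAt_id x).prodMk (hasDerivAt_const x t)))
  have hgt_eq : gt = fderiv ℝ G (x, t) (0, 1) :=
    hgt.unique (hderiv.comp_hasDerivAt t ((hasDerivAt_const t x).prodMk (hasDerivAt_id t)))
  rw [fderivWithin_of_mem_nhds hR, hgx_eq, hgt_eq, ← map_sub]
  simp

lemma integral_sub_le_of_transport_le {G h : ℝ × ℝ → ℝ} {gx gt : ℝ → ℝ → ℝ}
    (hx : x₀ < x₁) (ht : t₀ < t₁)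
    (hG : ContDiffOn ℝ 1 G (Icc x₀ x₁ ×ˢ Icc t₀ t₁))
    (hh : ContinuousOn h (Icc x₀ x₁ ×ˢ Icc t₀ t₁))
    (hgx : ∀ x ∈ Ioo x₀ x₁, ∀ t ∈ Ioo t₀ t₁, HasDerivAt (fun x' ↦ G (x', t)) (gx x t) x)
    (hgt : ∀ x ∈ Ioo x₀ x₁, ∀ t ∈ Ioo t₀ t₁, HasDerivAt (fun t' ↦ G (x, t')) (gt x t) t)
    (hle : ∀ x ∈ Ioo x₀ x₁, ∀ t ∈ Ioo t₀ t₁, gt x t - gx x t ≤ h (x, t))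
    (hG₀ : ∀ t ∈ Icc t₀ t₁, 0 ≤ G (x₀, t)) (hG₁ : ∀ t ∈ Icc t₀ t₁, G (x₁, t) ≤ 0) :
    (∫ x in Icc x₀ x₁, G (x, t₁)) - ∫ x in Icc x₀ x₁, G (x, t₀) ≤
      ∫ x in Icc x₀ x₁, ∫ t in Icc t₀ t₁, h (x, t) := by
  have hRc : IsCompact (Icc x₀ x₁ ×ˢ Icc t₀ t₁) := isCompact_Icc.prod isCompact_Icc
  have hh_int : IntegrableOn h (Icc x₀ x₁ ×ˢ Icc t₀ t₁) := hh.integrableOn_compact hRc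
  have hinterior : (Ioo x₀ x₁ ×ˢ Ioo t₀ t₁ : Set (ℝ × ℝ)) =ᵐ[volume] Icc x₀ x₁ ×ˢ Icc t₀ t₁ :=
    Measure.set_prod_ae_eq Ioo_ae_eq_Icc Ioo_ae_eq_Icc
  have hmono : ∫ q in Icc x₀ x₁ ×ˢ Icc t₀ t₁,
      fderivWithin ℝ G (Icc x₀ x₁ ×ˢ Icc t₀ t₁) q (-1, 1) ≤
        ∫ q in Icc x₀ x₁ ×ˢ Icc t₀ t₁, h q := by
    refine setIntegral_mono_ae_restrict (((continuousOn_fderivWithin_rectangle hx ht hG).clm_apply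
      continuousOn_const).integrableOn_compact hRc) hh_int ?_
    rw [← Measure.restrict_congr_set hinterior]
    filter_upwards [ae_restrict_mem (measurableSet_Ioo.prod measurableSet_Ioo)] with ⟨x, t⟩ hq
    rw [fderivWithin_transport_eq hG hq.1 hq.2 (hgx x hq.1 t hq.2) (hgt x hq.1 t hq.2)]
    exact hle x hq.1 t hq.2
  have hinflow : ∫ t in Icc t₀ t₁, G (x₁, t) ≤ 0 := setIntegral_nonpos measurableSet_Icc hG₁
  have houtflow : 0 ≤ ∫ t in Icc t₀ t₁, G (x₀, t) := setIntegral_nonneg measurableSet_Icc hG₀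
  rw [setIntegral_fderivWithin_transport hx ht hG, Measure.volume_eq_prod,
    setIntegral_prod h hh_int] at hmono
  linarith

lemma setIntegral_sub_le_of_transport_le {E Ex Et h : ℝ → ℝ → ℝ → ℝ} {t : ℝ} (hx : x₀ < x₁)
    (hE : ContDiffOn ℝ 1 (fun q : ℝ × ℝ × ℝ ↦ E q.1 q.2.1 q.2.2)
      (Icc x₀ x₁ ×ˢ Icc y₀ y₁ ×ˢ Icc t₀ t₁))
    (hh : ContinuousOn (fun q : (ℝ × ℝ) × ℝ ↦ h q.1.1 q.1.2 q.2)
      ((Icc x₀ x₁ ×ˢ Icc y₀ y₁) ×ˢ Icc t₀ t₁))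
    (hEx : ∀ x ∈ Ioo x₀ x₁, ∀ y ∈ Ioo y₀ y₁, ∀ t ∈ Ioo t₀ t₁,
      HasDerivAt (fun x' ↦ E x' y t) (Ex x y t) x)
    (hEt : ∀ x ∈ Ioo x₀ x₁, ∀ y ∈ Ioo y₀ y₁, ∀ t ∈ Ioo t₀ t₁,
      HasDerivAt (fun t' ↦ E x y t') (Et x y t) t)
    (hle : ∀ x ∈ Ioo x₀ x₁, ∀ y ∈ Ioo y₀ y₁, ∀ t ∈ Ioo t₀ t₁, Et x y t - Ex x y t ≤ h x y t)
    (hE₀ : ∀ y ∈ Icc y₀ y₁, ∀ t ∈ Icc t₀ t₁, 0 ≤ E x₀ y t)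
    (hE₁ : ∀ y ∈ Icc y₀ y₁, ∀ t ∈ Icc t₀ t₁, E x₁ y t ≤ 0) (ht : t ∈ Icc t₀ t₁) :
    (∫ q in Icc x₀ x₁ ×ˢ Icc y₀ y₁, E q.1 q.2 t) -
      (∫ q in Icc x₀ x₁ ×ˢ Icc y₀ y₁, E q.1 q.2 t₀) ≤
      ∫ s in t₀..t, ∫ q in Icc x₀ x₁ ×ˢ Icc y₀ y₁, h q.1 q.2 s := by
  obtain rfl | ht₀ := ht.1.eq_or_lt
  · simp
  have hIcc : Icc t₀ t ⊆ Icc t₀ t₁ := Icc_subset_Icc_right ht.2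
  have hIoo : Ioo t₀ t ⊆ Ioo t₀ t₁ := Ioo_subset_Ioo_right ht.2
  have hQ : volume.restrict (Icc x₀ x₁ ×ˢ Icc y₀ y₁) =
      (volume.restrict (Icc x₀ x₁)).prod (volume.restrict (Icc y₀ y₁)) :=
    (Measure.prod_restrict ..).symm
  have hE_int (s : ℝ) (hs : s ∈ Icc t₀ t₁) :
      Integrable (fun q : ℝ × ℝ ↦ E q.1 q.2 s) (volume.restrict (Icc x₀ x₁ ×ˢ Icc y₀ y₁)) :=
    (hE.continuousOn.comp (f := fun q : ℝ × ℝ ↦ (q.1, q.2, s)) (by fun_prop)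
      fun q hq ↦ ⟨hq.1, hq.2, hs⟩).integrableOn_compact (isCompact_Icc.prod isCompact_Icc)
  have hh_int : Integrable (fun q : (ℝ × ℝ) × ℝ ↦ h q.1.1 q.1.2 q.2)
      ((volume.restrict (Icc x₀ x₁ ×ˢ Icc y₀ y₁)).prod (volume.restrict (Icc t₀ t))) := by
    rw [Measure.prod_restrict]
    exact (hh.mono (prod_mono_right hIcc)).integrableOn_compact
      ((isCompact_Icc.prod isCompact_Icc).prod isCompact_Icc)
  have hE_int_t := hE_int t ht
  have hE_int_t₀ := hE_int t₀ ⟨le_rfl, ht.1.trans ht.2⟩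
  rw [intervalIntegral.integral_of_le ht₀.le, ← integral_Icc_eq_integral_Ioc,
    ← integral_integral_swap (f := fun (q : ℝ × ℝ) s ↦ h q.1 q.2 s) hh_int,
    ← integral_sub hE_int_t hE_int_t₀, hQ]
  refine integral_prod_mono_of_ae_slice (hQ ▸ hE_int_t.sub hE_int_t₀)
    (hQ ▸ hh_int.integral_prod_left) ?_
  have hslice := ((hQ ▸ hE_int_t).prod_left_ae).and ((hQ ▸ hE_int_t₀).prod_left_ae)
  rw [← restrict_Ioo_eq_restrict_Icc (a := y₀)] at hslice ⊢
  filter_upwards [hslice, ae_restrict_mem measurableSet_Ioo] with y ⟨hy_t, hy_t₀⟩ hy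
  have hy' := Ioo_subset_Icc_self hy
  rw [integral_sub hy_t hy_t₀]
  exact integral_sub_le_of_transport_le hx ht₀
    (hE.comp (f := fun q : ℝ × ℝ ↦ (q.1, y, q.2)) (by fun_prop)
      fun q hq ↦ ⟨hq.1, hy', hIcc hq.2⟩)
    (hh.comp (f := fun q : ℝ × ℝ ↦ ((q.1, y), q.2)) (by fun_prop)
      fun q hq ↦ ⟨⟨hq.1, hy'⟩, hIcc hq.2⟩)
    (fun x hx s hs ↦ hEx x hx y hy s (hIoo hs)) (fun x hx s hs ↦ hEt x hx y hy s (hIoo hs))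
    (fun x hx s hs ↦ hle x hx y hy s (hIoo hs))
    (fun s hs ↦ hE₀ y hy' s (hIcc hs)) (fun s hs ↦ hE₁ y hy' s (hIcc hs))

end Transport

section Storage

lemma setIntegral_storage_sub_le_supply {E : Type*} [NormedAddCommGroup E] [NormedSpace ℝ E]
    {x₀ x₁ y₀ y₁ t₀ t₁ t : ℝ} {p : ℝ × ℝ → ℝ} {H : E → ℝ} {σ : ℝ → ℝ → ℝ → ℝ}
    {w wx wt : ℝ → ℝ → ℝ → E} (hx : x₀ < x₁)
    (hp : ContDiffOn ℝ 1 p (Icc x₀ x₁ ×ˢ Icc y₀ y₁))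
    (hp_nonneg : ∀ q ∈ Icc x₀ x₁ ×ˢ Icc y₀ y₁, 0 ≤ p q)
    (hpx : ∀ x ∈ Ioo x₀ x₁, ∀ y ∈ Ioo y₀ y₁, 0 ≤ deriv (fun x' ↦ p (x', y)) x)
    (hH : ContDiff ℝ 1 H) (hH_nonneg : ∀ u, 0 ≤ H u) (hH_zero : H 0 = 0)
    (hσ : ContinuousOn (fun q : (ℝ × ℝ) × ℝ ↦ σ q.1.1 q.1.2 q.2)
      ((Icc x₀ x₁ ×ˢ Icc y₀ y₁) ×ˢ Icc t₀ t₁))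
    (hw : ContDiffOn ℝ 1 (fun q : ℝ × ℝ × ℝ ↦ w q.1 q.2.1 q.2.2)
      (Icc x₀ x₁ ×ˢ Icc y₀ y₁ ×ˢ Icc t₀ t₁))
    (hwx : ∀ x ∈ Ioo x₀ x₁, ∀ y ∈ Ioo y₀ y₁, ∀ t ∈ Ioo t₀ t₁,
      HasDerivAt (fun x' ↦ w x' y t) (wx x y t) x)
    (hwt : ∀ x ∈ Ioo x₀ x₁, ∀ y ∈ Ioo y₀ y₁, ∀ t ∈ Ioo t₀ t₁,
      HasDerivAt (fun t' ↦ w x y t') (wt x y t) t)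
    (hdiss : ∀ x ∈ Ioo x₀ x₁, ∀ y ∈ Ioo y₀ y₁, ∀ t ∈ Ioo t₀ t₁,
      fderiv ℝ H (w x y t) (wt x y t - wx x y t) ≤ σ x y t)
    (hw₁ : ∀ y ∈ Icc y₀ y₁, ∀ t ∈ Icc t₀ t₁, w x₁ y t = 0) (ht : t ∈ Icc t₀ t₁) :
    (∫ q in Icc x₀ x₁ ×ˢ Icc y₀ y₁, p q * H (w q.1 q.2 t)) -
      (∫ q in Icc x₀ x₁ ×ˢ Icc y₀ y₁, p q * H (w q.1 q.2 t₀)) ≤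
      ∫ s in t₀..t, ∫ q in Icc x₀ x₁ ×ˢ Icc y₀ y₁, p q * σ q.1 q.2 s := by
  have hH' (u : E) : HasFDerivAt H (fderiv ℝ H u) u :=
    (hH.differentiable one_ne_zero u).hasFDerivAt
  have hp' (x : ℝ) (hx : x ∈ Ioo x₀ x₁) (y : ℝ) (hy : y ∈ Ioo y₀ y₁) :
      HasDerivAt (fun x' ↦ p (x', y)) (deriv (fun x' ↦ p (x', y)) x) x :=
    have hpd : DifferentiableAt ℝ p (x, y) := (hp.differentiableOn one_ne_zero).differentiableAt
      (prod_mem_nhds (Icc_mem_nhds hx.1 hx.2) (Icc_mem_nhds hy.1 hy.2))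
    (hpd.comp x (by fun_prop : DifferentiableAt ℝ (fun x' ↦ (x', y)) x)).hasDerivAt
  refine setIntegral_sub_le_of_transport_le (E := fun x y t ↦ p (x, y) * H (w x y t))
    (h := fun x y t ↦ p (x, y) * σ x y t) hx ?_ ?_
    (fun x hx y hy t ht ↦ (hp' x hx y hy).mul ((hH' _).comp_hasDerivAt x (hwx x hx y hy t ht)))
    (fun x hx y hy t ht ↦ ((hH' _).comp_hasDerivAt t (hwt x hx y hy t ht)).const_mul _)
    ?_ ?_ ?_ ht
  · exact (hp.comp (f := fun q : ℝ × ℝ × ℝ ↦ (q.1, q.2.1)) (by fun_prop)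
      fun q hq ↦ ⟨hq.1, hq.2.1⟩).mul (hH.comp_contDiffOn hw)
  · exact (hp.continuousOn.comp continuousOn_fst fun q hq ↦ hq.1).mul hσ
  · intro x hx y hy t ht
    have hpσ := mul_le_mul_of_nonneg_left (hdiss x hx y hy t ht)
      (hp_nonneg (x, y) ⟨Ioo_subset_Icc_self hx, Ioo_subset_Icc_self hy⟩)
    have hpxH := mul_nonneg (hpx x hx y hy) (hH_nonneg (w x y t))
    rw [map_sub] at hpσ
    linarith
  · exact fun y hy t _ ↦ mul_nonneg (hp_nonneg _ ⟨left_mem_Icc.2 hx.le, hy⟩) (hH_nonneg _)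
  · intro y hy t ht
    simp [hw₁ y hy t ht, hH_zero]

end Storage

section BristleModel

variable {ι κ : Type*} [Fintype ι]

lemma contDiff_dotProduct_mulVec_self (A : Matrix ι ι ℝ) :
    ContDiff ℝ 1 fun u : ι → ℝ ↦ u ⬝ᵥ A *ᵥ u := by
  simp only [dotProduct, mulVec]
  fun_prop

lemma dotProduct_mulVec_comm {A : Matrix ι ι ℝ} (hA : A.IsHermitian) (u v : ι → ℝ) :
    u ⬝ᵥ A *ᵥ v = v ⬝ᵥ A *ᵥ u := by
  have hAT : Aᵀ = A := by simpa using hA.eq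
  simpa only [hAT] using dotProduct_transpose_mulVec A u v

variable [DecidableEq ι]

lemma hasFDerivAt_dotProduct_mulVec_self {A : Matrix ι ι ℝ} (hA : A.IsHermitian) (u : ι → ℝ) :
    HasFDerivAt (fun u ↦ u ⬝ᵥ A *ᵥ u)
      ((2 : ℝ) • (toLinearMap₂' ℝ A).toContinuousBilinearMap u) u := by
  have h := (toLinearMap₂' ℝ A).toContinuousBilinearMap.hasFDerivAt_of_bilinear
    (hasFDerivAt_id u) (hasFDerivAt_id u)
  simp only [LinearMap.toContinuousBilinearMap_apply, toLinearMap₂'_apply', id_eq] at h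
  refine h.congr_fderiv ?_
  ext v
  simp [toLinearMap₂'_apply', dotProduct_mulVec_comm hA v u, two_mul]

lemma posSemidef_inv_mul_self {M : Matrix ι ι ℝ} (hM : M.IsHermitian) :
    (M * M)⁻¹.PosSemidef := by
  simpa only [hM.eq] using (posSemidef_conjTranspose_mul_self M).inv

lemma posSemidef_inv_mul_smul_inv_mul_inv {A B : Matrix ι ι ℝ} (hA : A.PosDef)
    (hB : B.PosSemidef) {c : ℝ} (hc : 0 ≤ c) : (A⁻¹ * c • (B * A⁻¹)⁻¹).PosSemidef := by
  have hA_det : IsUnit A.det := (isUnit_iff_isUnit_det _).1 hA.isUnit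
  rw [Matrix.mul_inv_rev, nonsing_inv_nonsing_inv _ hA_det, mul_smul_comm,
    nonsing_inv_mul_cancel_left _ _ hA_det]
  exact hB.inv.smul hc

variable [Fintype κ]

/-- The total bristle force `K₀ z + ∑ᵢ fᵢ` of the state `w = (z, f)`. -/
def gmForce (K₀ : Matrix ι ι ℝ) (w : (ι → ℝ) × (κ → ι → ℝ)) : ι → ℝ :=
  K₀ *ᵥ w.1 + ∑ i, w.2 i

/-- The storage density `½ (zᵀ K₀ z + ∑ᵢ fᵢᵀ Kᵢ⁻¹ fᵢ)` of the state `w = (z, f)`. -/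
noncomputable def gmStorage (K₀ : Matrix ι ι ℝ) (K : κ → Matrix ι ι ℝ)
    (w : (ι → ℝ) × (κ → ι → ℝ)) : ℝ :=
  (1 / 2) * (w.1 ⬝ᵥ K₀ *ᵥ w.1 + ∑ i, w.2 i ⬝ᵥ (K i)⁻¹ *ᵥ w.2 i)

variable {K₀ : Matrix ι ι ℝ} {K : κ → Matrix ι ι ℝ}

lemma gmStorage_nonneg (hK₀ : K₀.PosSemidef) (hK : ∀ i, (K i).PosSemidef)
    (w : (ι → ℝ) × (κ → ι → ℝ)) : 0 ≤ gmStorage K₀ K w :=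
  mul_nonneg one_half_pos.le (add_nonneg (hK₀.dotProduct_mulVec_nonneg _)
    (Finset.sum_nonneg fun i _ ↦ (hK i).inv.dotProduct_mulVec_nonneg _))

lemma gmStorage_zero : gmStorage K₀ K 0 = 0 := by
  simp [gmStorage]

lemma contDiff_gmStorage : ContDiff ℝ 1 (gmStorage K₀ K) :=
  contDiff_const.mul (((contDiff_dotProduct_mulVec_self K₀).comp contDiff_fst).add
    (ContDiff.sum fun i _ ↦ (contDiff_dotProduct_mulVec_self (K i)⁻¹).comp
      ((contDiff_apply ℝ (ι → ℝ) i).comp contDiff_snd)))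

lemma fderiv_gmStorage_apply (hK₀ : K₀.IsHermitian) (hK : ∀ i, (K i).IsHermitian)
    (w δ : (ι → ℝ) × (κ → ι → ℝ)) :
    fderiv ℝ (gmStorage K₀ K) w δ =
      w.1 ⬝ᵥ K₀ *ᵥ δ.1 + ∑ i, w.2 i ⬝ᵥ (K i)⁻¹ *ᵥ δ.2 i := by
  have hz := (hasFDerivAt_dotProduct_mulVec_self hK₀ w.1).comp w hasFDerivAt_fst
  let proj (i : κ) : (ι → ℝ) × (κ → ι → ℝ) →L[ℝ] ι → ℝ :=
    .proj (R := ℝ) (φ := fun _ : κ ↦ ι → ℝ) i ∘L .snd ℝ (ι → ℝ) (κ → ι → ℝ)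
  have hf (i : κ) := (hasFDerivAt_dotProduct_mulVec_self (hK i).inv (w.2 i)).comp w
    (proj i).hasFDerivAt
  have hderiv := (hz.add (HasFDerivAt.fun_sum (u := Finset.univ) fun i _ ↦ hf i)).const_mul
    (1 / 2 : ℝ)
  rw [show fderiv ℝ (gmStorage K₀ K) w = _ from hderiv.fderiv]
  simp [proj, toLinearMap₂'_apply', ← Finset.mul_sum]

lemma fderiv_gmStorage_le_supply {Φ : Matrix ι ι ℝ} {R : κ → Matrix ι ι ℝ}
    {w δ : (ι → ℝ) × (κ → ι → ℝ)} {v : ι → ℝ}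
    (hK₀ : K₀.IsHermitian) (hK : ∀ i, (K i).PosDef)
    (hΦ : Φ.PosSemidef) (hR : ∀ i, ((K i)⁻¹ * R i).PosSemidef)
    (hz : δ.1 = -(Φ *ᵥ gmForce K₀ w) - v)
    (hf : ∀ i, δ.2 i = -(R i *ᵥ w.2 i) + K i *ᵥ δ.1) :
    fderiv ℝ (gmStorage K₀ K) w δ ≤ -(gmForce K₀ w ⬝ᵥ v) := by
  have hbranch (i : κ) : w.2 i ⬝ᵥ (K i)⁻¹ *ᵥ δ.2 i ≤ w.2 i ⬝ᵥ δ.1 := by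
    have hrelax : 0 ≤ w.2 i ⬝ᵥ ((K i)⁻¹ * R i) *ᵥ w.2 i := (hR i).dotProduct_mulVec_nonneg _
    have hKi : IsUnit (K i).det := (isUnit_iff_isUnit_det _).1 (hK i).isUnit
    rw [hf i, mulVec_add, mulVec_neg, mulVec_mulVec, mulVec_mulVec, nonsing_inv_mul _ hKi,
      one_mulVec, dotProduct_add, dotProduct_neg]
    linarith
  have hfriction : 0 ≤ gmForce K₀ w ⬝ᵥ Φ *ᵥ gmForce K₀ w := hΦ.dotProduct_mulVec_nonneg _
  calc fderiv ℝ (gmStorage K₀ K) w δ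
      = w.1 ⬝ᵥ K₀ *ᵥ δ.1 + ∑ i, w.2 i ⬝ᵥ (K i)⁻¹ *ᵥ δ.2 i :=
        fderiv_gmStorage_apply hK₀ (fun i ↦ (hK i).isHermitian) w δ
    _ ≤ w.1 ⬝ᵥ K₀ *ᵥ δ.1 + ∑ i, w.2 i ⬝ᵥ δ.1 := by gcongr with i; exact hbranch i
    _ = gmForce K₀ w ⬝ᵥ δ.1 := by
        rw [gmForce, add_dotProduct, sum_dotProduct, dotProduct_mulVec_comm hK₀,
          dotProduct_comm δ.1]
    _ = -(gmForce K₀ w ⬝ᵥ Φ *ᵥ gmForce K₀ w) - gmForce K₀ w ⬝ᵥ v := by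
        rw [hz, dotProduct_sub, dotProduct_neg]
    _ ≤ -(gmForce K₀ w ⬝ᵥ v) := by linarith

/-- Passivity with the friction term `-Ψ` replaced by any positive semidefinite `Φ(x, y, t)`, and
`τᵢ⁻¹ / V_r` by any `Rᵢ(x, y, t)` for which `Kᵢ⁻¹ Rᵢ` is positive semidefinite. -/
theorem frbd_gm_rectangular_passivity_general (hK₀ : K₀.PosSemidef) (hK : ∀ i, (K i).PosDef)
    {x₀ x₁ y₀ y₁ t₀ t₁ t : ℝ} {p : ℝ × ℝ → ℝ} {v : ℝ → ℝ → ℝ → ι → ℝ}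
    {Φ : ℝ → ℝ → ℝ → Matrix ι ι ℝ} {R : κ → ℝ → ℝ → ℝ → Matrix ι ι ℝ}
    {w wx wt : ℝ → ℝ → ℝ → (ι → ℝ) × (κ → ι → ℝ)} (hx : x₀ < x₁)
    (hp : ContDiffOn ℝ 1 p (Icc x₀ x₁ ×ˢ Icc y₀ y₁))
    (hp_nonneg : ∀ q ∈ Icc x₀ x₁ ×ˢ Icc y₀ y₁, 0 ≤ p q)
    (hpx : ∀ x ∈ Ioo x₀ x₁, ∀ y ∈ Ioo y₀ y₁, 0 ≤ deriv (fun x' ↦ p (x', y)) x)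
    (hv : ContinuousOn (fun q : (ℝ × ℝ) × ℝ ↦ v q.1.1 q.1.2 q.2)
      ((Icc x₀ x₁ ×ˢ Icc y₀ y₁) ×ˢ Icc t₀ t₁))
    (hΦ : ∀ x ∈ Ioo x₀ x₁, ∀ y ∈ Ioo y₀ y₁, ∀ t ∈ Ioo t₀ t₁, (Φ x y t).PosSemidef)
    (hR : ∀ i, ∀ x ∈ Ioo x₀ x₁, ∀ y ∈ Ioo y₀ y₁, ∀ t ∈ Ioo t₀ t₁,
      ((K i)⁻¹ * R i x y t).PosSemidef)
    (hw : ContDiffOn ℝ 1 (fun q : ℝ × ℝ × ℝ ↦ w q.1 q.2.1 q.2.2)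
      (Icc x₀ x₁ ×ˢ Icc y₀ y₁ ×ˢ Icc t₀ t₁))
    (hwx : ∀ x ∈ Ioo x₀ x₁, ∀ y ∈ Ioo y₀ y₁, ∀ t ∈ Ioo t₀ t₁,
      HasDerivAt (fun x' ↦ w x' y t) (wx x y t) x)
    (hwt : ∀ x ∈ Ioo x₀ x₁, ∀ y ∈ Ioo y₀ y₁, ∀ t ∈ Ioo t₀ t₁,
      HasDerivAt (fun t' ↦ w x y t') (wt x y t) t)
    (hz : ∀ x ∈ Ioo x₀ x₁, ∀ y ∈ Ioo y₀ y₁, ∀ t ∈ Ioo t₀ t₁,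
      (wt x y t - wx x y t).1 = -(Φ x y t *ᵥ gmForce K₀ (w x y t)) - v x y t)
    (hf : ∀ i, ∀ x ∈ Ioo x₀ x₁, ∀ y ∈ Ioo y₀ y₁, ∀ t ∈ Ioo t₀ t₁,
      (wt x y t - wx x y t).2 i =
        -(R i x y t *ᵥ (w x y t).2 i) + K i *ᵥ (wt x y t - wx x y t).1)
    (hw₁ : ∀ y ∈ Icc y₀ y₁, ∀ t ∈ Icc t₀ t₁, w x₁ y t = 0) (ht : t ∈ Icc t₀ t₁) :
    (∫ q in Icc x₀ x₁ ×ˢ Icc y₀ y₁, p q * gmStorage K₀ K (w q.1 q.2 t)) -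
      (∫ q in Icc x₀ x₁ ×ˢ Icc y₀ y₁, p q * gmStorage K₀ K (w q.1 q.2 t₀)) ≤
      ∫ s in t₀..t, -∫ q in Icc x₀ x₁ ×ˢ Icc y₀ y₁,
        p q * (gmForce K₀ (w q.1 q.2 s) ⬝ᵥ v q.1 q.2 s) := by
  have hforce : Continuous (gmForce (κ := κ) K₀) := by
    unfold gmForce
    fun_prop
  have hw_cont : ContinuousOn (fun q : (ℝ × ℝ) × ℝ ↦ w q.1.1 q.1.2 q.2)
      ((Icc x₀ x₁ ×ˢ Icc y₀ y₁) ×ˢ Icc t₀ t₁) :=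
    hw.continuousOn.comp (f := fun q : (ℝ × ℝ) × ℝ ↦ (q.1.1, q.1.2, q.2)) (by fun_prop)
      fun q hq ↦ ⟨hq.1.1, hq.1.2, hq.2⟩
  have hsupply : ContinuousOn
      (fun q : (ℝ × ℝ) × ℝ ↦ -(gmForce K₀ (w q.1.1 q.1.2 q.2) ⬝ᵥ v q.1.1 q.1.2 q.2))
      ((Icc x₀ x₁ ×ˢ Icc y₀ y₁) ×ˢ Icc t₀ t₁) :=
    ((continuous_fst.dotProduct continuous_snd).comp_continuousOn
      ((hforce.comp_continuousOn hw_cont).prodMk hv)).neg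
  simp only [← integral_neg, ← mul_neg]
  exact setIntegral_storage_sub_le_supply (σ := fun x y t ↦ -(gmForce K₀ (w x y t) ⬝ᵥ v x y t))
    hx hp hp_nonneg hpx contDiff_gmStorage
    (gmStorage_nonneg hK₀ fun i ↦ (hK i).posSemidef) gmStorage_zero hsupply hw hwx hwt
    (fun x hx y hy t ht ↦ fderiv_gmStorage_le_supply hK₀.isHermitian hK (hΦ x hx y hy t ht)
      (fun i ↦ hR i x hx y hy t ht) (hz x hx y hy t ht) fun i ↦ hf i x hx y hy t ht) hw₁ ht

end BristleModel

/-- Lemma 5.1: passivity of the standard linear FrBD_{n+1}-GM model on a rectangular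
contact area `𝒞 = [−a,a] × [−b,b]`, with leading-edge boundary condition at `x = a` and a
pressure satisfying `∂p/∂x ≥ 0` (i.e. `∇·(p V̄) ≤ 0` for the transport field `V̄ = (−1,0)`). -/
theorem frbd_gm_rectangular_passivity (n : ℕ)
    (K₀ : Matrix (Fin 2) (Fin 2) ℝ) (K C : Fin n → Matrix (Fin 2) (Fin 2) ℝ)
    (hK₀ : K₀.PosDef) (hK : ∀ i, (K i).PosDef) (hC : ∀ i, (C i).PosDef)
    (Mm : (Fin 2 → ℝ) → Matrix (Fin 2) (Fin 2) ℝ)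
    (hMm : ∀ y, (Mm y).PosDef) (hMmcont : Continuous Mm)
    (ε : ℝ) (hε : 0 ≤ ε)
    (a b S Vmin : ℝ) (ha : 0 < a) (hb : 0 < b) (hS : 0 < S) (hVmin : 0 < Vmin)
    -- the pressure distribution
    (p : ℝ × ℝ → ℝ) (hp : ContDiff ℝ 1 p)
    (hp0 : ∀ q ∈ Set.Icc (-a) a ×ˢ Set.Icc (-b) b, 0 ≤ p q)
    (hpx : ∀ q ∈ Set.Icc (-a) a ×ˢ Set.Icc (-b) b,
      0 ≤ deriv (fun x => p (x, q.2)) q.1)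
    -- the slip input and rolling speed
    (vb : ℝ → ℝ → ℝ → (Fin 2 → ℝ))
    (hvb : ContinuousOn (fun q : (ℝ × ℝ) × ℝ => vb q.1.1 q.1.2 q.2)
      ((Set.Icc (-a) a ×ˢ Set.Icc (-b) b) ×ˢ Set.Icc 0 S))
    (Vr : ℝ → ℝ) (hVrc : ContinuousOn Vr (Set.Icc 0 S))
    (hVr : ∀ s ∈ Set.Icc 0 S, Vmin ≤ Vr s)
    -- the states and their regularity
    (z : ℝ → ℝ → ℝ → (Fin 2 → ℝ)) (f : Fin n → ℝ → ℝ → ℝ → (Fin 2 → ℝ))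
    (hzC1 : ContDiffOn ℝ 1 (fun q : ℝ × ℝ × ℝ => z q.1 q.2.1 q.2.2)
      (Set.Icc (-a) a ×ˢ Set.Icc (-b) b ×ˢ Set.Icc 0 S))
    (hfC1 : ∀ i, ContDiffOn ℝ 1 (fun q : ℝ × ℝ × ℝ => f i q.1 q.2.1 q.2.2)
      (Set.Icc (-a) a ×ˢ Set.Icc (-b) b ×ˢ Set.Icc 0 S))
    -- partial derivatives at interior points
    (zx zs : ℝ → ℝ → ℝ → (Fin 2 → ℝ)) (fx fs : Fin n → ℝ → ℝ → ℝ → (Fin 2 → ℝ))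
    (hzx : ∀ x ∈ Set.Ioo (-a) a, ∀ y ∈ Set.Ioo (-b) b, ∀ s ∈ Set.Ioo 0 S,
      HasDerivAt (fun x' => z x' y s) (zx x y s) x)
    (hzs : ∀ x ∈ Set.Ioo (-a) a, ∀ y ∈ Set.Ioo (-b) b, ∀ s ∈ Set.Ioo 0 S,
      HasDerivAt (fun s' => z x y s') (zs x y s) s)
    (hfx : ∀ i, ∀ x ∈ Set.Ioo (-a) a, ∀ y ∈ Set.Ioo (-b) b, ∀ s ∈ Set.Ioo 0 S,
      HasDerivAt (fun x' => f i x' y s) (fx i x y s) x)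
    (hfs : ∀ i, ∀ x ∈ Set.Ioo (-a) a, ∀ y ∈ Set.Ioo (-b) b, ∀ s ∈ Set.Ioo 0 S,
      HasDerivAt (fun s' => f i x y s') (fs i x y s) s)
    -- the standard linear FrBD_{n+1}-GM equations at interior points: D z = Ψ f − v̄
    (hPDEz : ∀ x ∈ Set.Ioo (-a) a, ∀ y ∈ Set.Ioo (-b) b, ∀ s ∈ Set.Ioo 0 S,
      zs x y s - zx x y s =
        -(((Vr s)⁻¹ *
            regNorm ε ((Mm (Vr s • vb x y s)).mulVec (Vr s • vb x y s))) •
          ((Mm (Vr s • vb x y s) * Mm (Vr s • vb x y s))⁻¹.mulVec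
            (K₀.mulVec (z x y s) + ∑ i, f i x y s))) - vb x y s)
    -- and D fᵢ = −(1/V_r) τᵢ⁻¹ fᵢ + Kᵢ D z
    (hPDEf : ∀ i, ∀ x ∈ Set.Ioo (-a) a, ∀ y ∈ Set.Ioo (-b) b, ∀ s ∈ Set.Ioo 0 S,
      fs i x y s - fx i x y s =
        -((Vr s)⁻¹ • ((C i * (K i)⁻¹)⁻¹.mulVec (f i x y s))) +
          (K i).mulVec (zs x y s - zx x y s))
    -- leading-edge boundary condition at x = a
    (hBCz : ∀ y ∈ Set.Icc (-b) b, ∀ s ∈ Set.Icc 0 S, z a y s = 0)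
    (hBCf : ∀ i, ∀ y ∈ Set.Icc (-b) b, ∀ s ∈ Set.Icc 0 S, f i a y s = 0) :
    let W : ℝ → ℝ := fun s =>
      (1/2) * ∫ q in Set.Icc (-a) a ×ˢ Set.Icc (-b) b,
        p q * ((z q.1 q.2 s ⬝ᵥ K₀.mulVec (z q.1 q.2 s)) +
          ∑ i, f i q.1 q.2 s ⬝ᵥ (K i)⁻¹.mulVec (f i q.1 q.2 s))
    ∀ s ∈ Set.Icc 0 S,
      W s - W 0 ≤ ∫ s' in (0:ℝ)..s,
        -(∫ q in Set.Icc (-a) a ×ˢ Set.Icc (-b) b,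
          p q * ((K₀.mulVec (z q.1 q.2 s') + ∑ i, f i q.1 q.2 s') ⬝ᵥ vb q.1 q.2 s')) := by
  intro _ s hs
  have hVr_inv (t : ℝ) (ht : t ∈ Ioo 0 S) : 0 ≤ (Vr t)⁻¹ :=
    inv_nonneg.2 (hVmin.le.trans (hVr t (Ioo_subset_Icc_self ht)))
  have hpassive := frbd_gm_rectangular_passivity_general (v := vb)
    (w := fun x y t ↦ (z x y t, fun i ↦ f i x y t))
    (wx := fun x y t ↦ (zx x y t, fun i ↦ fx i x y t))
    (wt := fun x y t ↦ (zs x y t, fun i ↦ fs i x y t))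
    (Φ := fun x y t ↦ ((Vr t)⁻¹ * regNorm ε (Mm (Vr t • vb x y t) *ᵥ (Vr t • vb x y t))) •
      (Mm (Vr t • vb x y t) * Mm (Vr t • vb x y t))⁻¹)
    (R := fun i _ _ t ↦ (Vr t)⁻¹ • (C i * (K i)⁻¹)⁻¹)
    hK₀.posSemidef hK (neg_lt_self ha) hp.contDiffOn hp0
    (fun x hx y hy ↦ hpx (x, y) ⟨Ioo_subset_Icc_self hx, Ioo_subset_Icc_self hy⟩) hvb
    (fun _ _ _ _ t ht ↦ (posSemidef_inv_mul_self (hMm _).isHermitian).smul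
      (mul_nonneg (hVr_inv t ht) (Real.sqrt_nonneg _)))
    (fun i _ _ _ _ t ht ↦
      posSemidef_inv_mul_smul_inv_mul_inv (hK i) (hC i).posSemidef (hVr_inv t ht))
    (hzC1.prodMk (contDiffOn_pi.2 hfC1))
    (fun x hx y hy t ht ↦ (hzx x hx y hy t ht).prodMk
      (hasDerivAt_pi.2 fun i ↦ hfx i x hx y hy t ht))
    (fun x hx y hy t ht ↦ (hzs x hx y hy t ht).prodMk
      (hasDerivAt_pi.2 fun i ↦ hfs i x hx y hy t ht))
    (fun x hx y hy t ht ↦ (hPDEz x hx y hy t ht).trans (by simp only [smul_mulVec, gmForce]))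
    (fun i x hx y hy t ht ↦ by
      simpa only [smul_mulVec, Prod.mk_sub_mk, Pi.sub_apply] using hPDEf i x hx y hy t ht)
    (fun y hy t ht ↦ Prod.ext (hBCz y hy t ht) (funext fun i ↦ hBCf i y hy t ht)) hs
  simpa only [gmStorage, gmForce, mul_left_comm _ (1 / 2 : ℝ), integral_const_mul] using hpassive
end
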